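/- Let A and B be finite groups with no common composition factors, i.e., there do not exist subgroups H₁ ≤ A, K₁ normal in H₁, H₂ ≤ B, K₂ normal in H₂ such that H₁/K₁ and H₂/K₂ are simple and isomorphic to each other. Then m_I(A × B) = m_I(A) + m_I(B). -/

import Mathlib

/-!
A set `S` invariably generates `G` iff no proper subgroup has conjugates covering `S`
(`invGen_iff_forall_subset_conjUnion`). If `A` and `B` share no nontrivial quotient, then by
Goursat's lemma a subgroup of `A × B` projecting onto both factors is everything, so `S ⊆ A × B`
invariably generates iff both of its projections do.

For `≤`: if `S` is a minimal invariable generating set of `A × B`, lift minimal invariable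
generating subsets of its two projections injectively to `S₁, S₂ ⊆ S`; then `S₁ ∪ S₂` invariably
generates, so `S = S₁ ∪ S₂`. For `≥`: the union of the images of minimal invariable generating sets
of `A` and `B` is one of `A × B`. Finite groups do have such sets, by Jordan's theorem that a finite
group is not covered by the conjugates of a proper subgroup (`invGen_univ`).
-/

/-- A subset `S` invariably generates `G` if for every choice of conjugators
(one for each element), the conjugated set generates `G`. -/
def InvGen {G : Type*} [Group G] (S : Set G) : Prop :=
  ∀ σ : G → G, Subgroup.closure ((fun g => (σ g)⁻¹ * g * σ g) '' S) = ⊤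

/-- `S` is a minimal invariable generating set of `G`. -/
def MinInvGen {G : Type*} [Group G] (S : Set G) : Prop :=
  InvGen S ∧ ∀ T : Set G, T ⊂ S → ¬ InvGen T

/-- `S` is a minimal generating set of `G`. -/
def MinGen {G : Type*} [Group G] (S : Set G) : Prop :=
  Subgroup.closure S = ⊤ ∧ ∀ T : Set G, T ⊂ S → Subgroup.closure T ≠ ⊤

/-- `m(G)`: largest cardinality of a minimal generating set of `G`. -/
noncomputable def mGen (G : Type*) [Group G] : ℕ :=
  sSup {n : ℕ | ∃ S : Set G, MinGen S ∧ S.ncard = n}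

/-- `m_I(G)`: largest cardinality of a minimal invariable generating set of `G`. -/
noncomputable def mInv (G : Type*) [Group G] : ℕ :=
  sSup {n : ℕ | ∃ S : Set G, MinInvGen S ∧ S.ncard = n}

/-- `d_I(G)`: smallest cardinality of a minimal invariable generating set of `G`. -/
noncomputable def dInv (G : Type*) [Group G] : ℕ :=
  sInf {n : ℕ | ∃ S : Set G, MinInvGen S ∧ S.ncard = n}

/-- The union of all conjugates of a subgroup `M`, as a set. -/
def conjUnion {G : Type*} [Group G] (M : Subgroup G) : Set G :=
  ⋃ g : G, (fun m => g⁻¹ * m * g) '' (M : Set G)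

/-- `A` and `B` have a common composition factor, i.e. isomorphic simple sections. -/
def HasCommonSimpleSection (A B : Type*) [Group A] [Group B] : Prop :=
  ∃ (H₁ : Subgroup A) (K₁ : Subgroup H₁) (hK₁ : K₁.Normal)
    (H₂ : Subgroup B) (K₂ : Subgroup H₂) (hK₂ : K₂.Normal),
      letI := hK₁
      letI := hK₂
      IsSimpleGroup (H₁ ⧸ K₁) ∧ IsSimpleGroup (H₂ ⧸ K₂) ∧
        Nonempty ((H₁ ⧸ K₁) ≃* (H₂ ⧸ K₂))

open MulAction Set

section InvariableGeneration

variable {G Q : Type*} [Group G] [Group Q]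

lemma mem_conjUnion {M : Subgroup G} {x : G} : x ∈ conjUnion M ↔ ∃ g, g * x * g⁻¹ ∈ M := by
  simp only [conjUnion, mem_iUnion, mem_image, SetLike.mem_coe]
  refine exists_congr fun g => ⟨?_, fun hx => ⟨_, hx, by group⟩⟩
  rintro ⟨m, hm, rfl⟩
  simpa [mul_assoc] using hm

lemma one_mem_conjUnion (M : Subgroup G) : 1 ∈ conjUnion M :=
  mem_conjUnion.2 ⟨1, by simp⟩

lemma map_mem_conjUnion_map {M : Subgroup G} {x : G} (f : G →* Q) (hx : x ∈ conjUnion M) :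
    f x ∈ conjUnion (M.map f) := by
  obtain ⟨g, hg⟩ := mem_conjUnion.1 hx
  exact mem_conjUnion.2 ⟨f g, by simpa using Subgroup.mem_map_of_mem f hg⟩

lemma mem_conjUnion_comap {f : G →* Q} (hf : Function.Surjective f) {M : Subgroup Q} {x : G}
    (hx : f x ∈ conjUnion M) : x ∈ conjUnion (M.comap f) := by
  obtain ⟨q, hq⟩ := mem_conjUnion.1 hx
  obtain ⟨g, rfl⟩ := hf q
  exact mem_conjUnion.2 ⟨g, by simpa using hq⟩

lemma invGen_iff_forall_subset_conjUnion {S : Set G} :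
    InvGen S ↔ ∀ M : Subgroup G, S ⊆ conjUnion M → M = ⊤ := by
  constructor
  · intro hS M hSM
    have hconj : ∀ g, ∃ c, g ∈ S → c⁻¹ * g * c ∈ M := fun g => by
      by_cases hg : g ∈ S
      · obtain ⟨c, hc⟩ := mem_conjUnion.1 (hSM hg)
        exact ⟨c⁻¹, fun _ => by simpa using hc⟩
      · exact ⟨1, fun h => absurd h hg⟩
    choose σ hσ using hconj
    rw [← top_le_iff, ← hS σ, Subgroup.closure_le]
    rintro _ ⟨g, hg, rfl⟩
    exact hσ g hg
  · intro hS σ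
    refine hS _ fun g hg => mem_conjUnion.2 ⟨(σ g)⁻¹, ?_⟩
    simpa using Subgroup.subset_closure (mem_image_of_mem (fun g => (σ g)⁻¹ * g * σ g) hg)

namespace InvGen

variable {S T : Set G}

lemma mono (hS : InvGen S) (hST : S ⊆ T) : InvGen T :=
  invGen_iff_forall_subset_conjUnion.2 fun M hM =>
    invGen_iff_forall_subset_conjUnion.1 hS M (hST.trans hM)

lemma of_insert_one (hS : InvGen (insert 1 S)) : InvGen S :=
  invGen_iff_forall_subset_conjUnion.2 fun M hM =>
    invGen_iff_forall_subset_conjUnion.1 hS M (insert_subset (one_mem_conjUnion M) hM)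

lemma image {f : G →* Q} (hf : Function.Surjective f) (hS : InvGen S) : InvGen (f '' S) := by
  refine invGen_iff_forall_subset_conjUnion.2 fun M hM => ?_
  have hcomap : M.comap f = ⊤ := invGen_iff_forall_subset_conjUnion.1 hS _ fun x hx =>
    mem_conjUnion_comap hf (hM (mem_image_of_mem f hx))
  rw [← Subgroup.map_comap_eq_self_of_surjective hf M, hcomap, Subgroup.map_top_of_surjective f hf]

lemma map_eq_top_of_subset_conjUnion {f : G →* Q} (hS : InvGen (f '' S)) {M : Subgroup G}
    (hM : S ⊆ conjUnion M) : M.map f = ⊤ :=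
  invGen_iff_forall_subset_conjUnion.1 hS _
    (image_subset_iff.2 fun _ hx => map_mem_conjUnion_map f (hM hx))

end InvGen

/-- By Burnside's lemma the average number of fixed points is one, so each element, including the
identity, has exactly one. -/
lemma subsingleton_of_forall_fixedBy_nonempty {X : Type*} [MulAction G X] [IsPretransitive G X]
    [Finite G] (hfix : ∀ g : G, (fixedBy X g).Nonempty) : Subsingleton X := by
  classical
  obtain ⟨x₀, -⟩ := hfix 1
  have : Finite X := .of_surjective (fun g : G => g • x₀) (exists_smul_eq G x₀)
  cases nonempty_fintype G
  cases nonempty_fintype X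
  have : Subsingleton (orbitRel.Quotient G X) :=
    (pretransitive_iff_subsingleton_quotient G X).1 inferInstance
  have : Unique (orbitRel.Quotient G X) := uniqueOfSubsingleton (Quotient.mk _ x₀)
  have hburnside : ∑ g : G, Fintype.card (fixedBy X g) = ∑ _g : G, 1 := by
    simpa using sum_card_fixedBy_eq_card_orbits_mul_card_group G X
  have hpos : ∀ g ∈ Finset.univ, 1 ≤ Fintype.card (fixedBy X g) := fun g _ =>
    Fintype.card_pos_iff.2 (hfix g).to_subtype
  have hone : Fintype.card (fixedBy X (1 : G)) = 1 :=
    ((Finset.sum_eq_sum_iff_of_le hpos).1 hburnside.symm 1 (Finset.mem_univ 1)).symm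
  refine ⟨fun x y => congrArg Subtype.val <|
    Fintype.card_le_one_iff.1 hone.le (⟨x, ?_⟩ : fixedBy X (1 : G)) ⟨y, ?_⟩⟩ <;> simp

variable (G) in
lemma invGen_univ [Finite G] : InvGen (univ : Set G) := by
  refine invGen_iff_forall_subset_conjUnion.2 fun M hM => ?_
  have hfix (g : G) : (fixedBy (G ⧸ M) g).Nonempty := by
    obtain ⟨c, hc⟩ := mem_conjUnion.1 (hM (mem_univ g))
    refine ⟨(c⁻¹ : G), ?_⟩
    rw [mem_fixedBy, Quotient.smul_coe, eq_comm, QuotientGroup.eq]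
    simpa [mul_assoc] using hc
  have := subsingleton_of_forall_fixedBy_nonempty hfix
  exact QuotientGroup.subgroup_eq_top_of_subsingleton M this

end InvariableGeneration

section MinimalInvariableGeneration

variable {G : Type*} [Group G] {S : Set G}

lemma minInvGen_iff_minimal : MinInvGen S ↔ Minimal InvGen S :=
  minimal_iff_forall_ssubset.symm

lemma minInvGen_iff_forall_sdiff_singleton :
    MinInvGen S ↔ InvGen S ∧ ∀ g ∈ S, ¬ InvGen (S \ {g}) :=
  minInvGen_iff_minimal.trans (minimal_iff_forall_sdiff_singleton fun _ _ => InvGen.mono)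

lemma MinInvGen.one_notMem (hS : MinInvGen S) : 1 ∉ S := fun h1 =>
  (minInvGen_iff_forall_sdiff_singleton.1 hS).2 1 h1 <| .of_insert_one <|
    by simpa [insert_eq_of_mem h1] using hS.1

lemma InvGen.exists_minInvGen_subset [Finite G] (hS : InvGen S) : ∃ T ⊆ S, MinInvGen T := by
  simp only [minInvGen_iff_minimal]
  exact exists_minimal_le_of_wellFoundedLT InvGen S hS

variable (G) in
lemma bddAbove_ncard_minInvGen [Finite G] :
    BddAbove {n : ℕ | ∃ S : Set G, MinInvGen S ∧ S.ncard = n} := by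
  refine ⟨Nat.card G, ?_⟩
  rintro _ ⟨S, -, rfl⟩
  exact ncard_le_card S

lemma MinInvGen.ncard_le_mInv [Finite G] (hS : MinInvGen S) : S.ncard ≤ mInv G :=
  le_csSup (bddAbove_ncard_minInvGen G) ⟨S, hS, rfl⟩

lemma mInv_le {n : ℕ} (h : ∀ S : Set G, MinInvGen S → S.ncard ≤ n) : mInv G ≤ n := by
  refine csSup_le' ?_
  rintro _ ⟨S, hS, rfl⟩
  exact h S hS

variable (G) in
lemma exists_minInvGen_ncard_eq_mInv [Finite G] :
    ∃ S : Set G, MinInvGen S ∧ S.ncard = mInv G := by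
  obtain ⟨S, -, hS⟩ := (invGen_univ G).exists_minInvGen_subset
  have hne : {n : ℕ | ∃ S : Set G, MinInvGen S ∧ S.ncard = n}.Nonempty := ⟨S.ncard, S, hS, rfl⟩
  exact Nat.sSup_mem hne (bddAbove_ncard_minInvGen G)

lemma InvGen.exists_subset_ncard_le_mInv [Finite G] {α : Type*} {f : α → G} {S : Set α}
    (hS : InvGen (f '' S)) : ∃ T ⊆ S, InvGen (f '' T) ∧ T.ncard ≤ mInv G := by
  obtain ⟨M, hMS, hM⟩ := hS.exists_minInvGen_subset
  obtain ⟨T, hTS, hinj, rfl⟩ := SurjOn.exists_subset_injOn_image_eq hMS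
  exact ⟨T, hTS, hM.1, hinj.ncard_image ▸ hM.ncard_le_mInv⟩

end MinimalInvariableGeneration

section CommonQuotients

/-- `A` and `B` have isomorphic nontrivial quotients. This is the obstruction, in Goursat's lemma,
to a subgroup of `A × B` that projects onto both factors being the whole product. -/
def HasCommonNontrivialQuotient (A B : Type*) [Group A] [Group B] : Prop :=
  ∃ (K : Subgroup A) (_ : K.Normal) (L : Subgroup B) (_ : L.Normal),
    K ≠ ⊤ ∧ Nonempty (A ⧸ K ≃* B ⧸ L)

variable {A B : Type*} [Group A] [Group B]

lemma isSimpleGroup_quotient_of_maximal {K : Subgroup A} [K.Normal]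
    (hK : Maximal (fun N : Subgroup A => N.Normal ∧ N ≠ ⊤) K) : IsSimpleGroup (A ⧸ K) := by
  have : Nontrivial (A ⧸ K) := QuotientGroup.nontrivial_iff.2 hK.prop.2
  refine ⟨fun L hL => ?_⟩
  have hsurj := QuotientGroup.mk'_surjective K
  rw [← Subgroup.map_comap_eq_self_of_surjective hsurj L]
  by_cases htop : L.comap (QuotientGroup.mk' K) = ⊤
  · exact .inr (by rw [htop, Subgroup.map_top_of_surjective _ hsurj])
  · have hle : L.comap (QuotientGroup.mk' K) ≤ K :=
      hK.le_of_ge ⟨hL.comap _, htop⟩ (QuotientGroup.le_comap_mk' K L)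
    exact .inl ((Subgroup.map_eq_bot_iff _).2 (by rwa [QuotientGroup.ker_mk']))

variable (A) in
lemma exists_normal_isSimpleGroup_quotient [Finite A] [Nontrivial A] :
    ∃ (K : Subgroup A) (_ : K.Normal), IsSimpleGroup (A ⧸ K) := by
  obtain ⟨K, hK⟩ := (toFinite {N : Subgroup A | N.Normal ∧ N ≠ ⊤}).exists_maximal
    ⟨⊥, inferInstance, bot_ne_top⟩
  have := hK.prop.1
  exact ⟨K, this, isSimpleGroup_quotient_of_maximal hK⟩

lemma hasCommonSimpleSection_of_surjective {Q : Type*} [Group Q] [IsSimpleGroup Q] {f : A →* Q}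
    {g : B →* Q} (hf : Function.Surjective f) (hg : Function.Surjective g) :
    HasCommonSimpleSection A B := by
  let e₁ := QuotientGroup.quotientKerEquivOfSurjective (f.comp (⊤ : Subgroup A).subtype)
    (hf.comp Subgroup.topEquiv.surjective)
  let e₂ := QuotientGroup.quotientKerEquivOfSurjective (g.comp (⊤ : Subgroup B).subtype)
    (hg.comp Subgroup.topEquiv.surjective)
  exact ⟨⊤, _, inferInstance, ⊤, _, inferInstance, e₁.isSimpleGroup, e₂.isSimpleGroup,
    ⟨e₁.trans e₂.symm⟩⟩

lemma HasCommonNontrivialQuotient.hasCommonSimpleSection [Finite A]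
    (h : HasCommonNontrivialQuotient A B) : HasCommonSimpleSection A B := by
  obtain ⟨K, _, L, _, hK, ⟨e⟩⟩ := h
  have : Nontrivial (A ⧸ K) := QuotientGroup.nontrivial_iff.2 hK
  obtain ⟨N, _, _⟩ := exists_normal_isSimpleGroup_quotient (A ⧸ K)
  have hN := QuotientGroup.mk'_surjective N
  exact hasCommonSimpleSection_of_surjective
    (f := (QuotientGroup.mk' N).comp (QuotientGroup.mk' K))
    (g := (QuotientGroup.mk' N).comp (e.symm.toMonoidHom.comp (QuotientGroup.mk' L)))
    (hN.comp (QuotientGroup.mk'_surjective K))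
    (hN.comp (e.symm.surjective.comp (QuotientGroup.mk'_surjective L)))

lemma eq_top_of_goursatFst_eq_top {H : Subgroup (A × B)} (hfst : H.goursatFst = ⊤)
    (hsnd : H.map (MonoidHom.snd A B) = ⊤) : H = ⊤ := by
  rw [eq_top_iff]
  rintro ⟨a, b⟩ -
  obtain ⟨⟨a', b⟩, hx, rfl⟩ : b ∈ H.map (MonoidHom.snd A B) := hsnd ▸ Subgroup.mem_top b
  have ha : a * a'⁻¹ ∈ H.goursatFst := hfst ▸ Subgroup.mem_top _
  simpa using mul_mem (Subgroup.mem_goursatFst.1 ha) hx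

lemma eq_top_of_map_fst_of_map_snd (h : ¬ HasCommonNontrivialQuotient A B) {H : Subgroup (A × B)}
    (hfst : H.map (MonoidHom.fst A B) = ⊤) (hsnd : H.map (MonoidHom.snd A B) = ⊤) : H = ⊤ := by
  have hsurj₁ : Function.Surjective ((MonoidHom.fst A B).comp H.subtype) :=
    MonoidHom.range_eq_top.1 (by rw [MonoidHom.range_comp, Subgroup.range_subtype, hfst])
  have hsurj₂ : Function.Surjective ((MonoidHom.snd A B).comp H.subtype) :=
    MonoidHom.range_eq_top.1 (by rw [MonoidHom.range_comp, Subgroup.range_subtype, hsnd])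
  obtain ⟨e, -⟩ := Subgroup.goursat_surjective hsurj₁ hsurj₂
  by_contra hH
  exact h ⟨H.goursatFst, Subgroup.normal_goursatFst hsurj₁, H.goursatSnd,
    Subgroup.normal_goursatSnd hsurj₂, fun htop => hH (eq_top_of_goursatFst_eq_top htop hsnd), ⟨e⟩⟩

end CommonQuotients

section Products

variable {A B : Type*} [Group A] [Group B]

lemma invGen_prod_iff (h : ¬ HasCommonNontrivialQuotient A B) {S : Set (A × B)} :
    InvGen S ↔ InvGen (MonoidHom.fst A B '' S) ∧ InvGen (MonoidHom.snd A B '' S) :=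
  ⟨fun hS => ⟨hS.image Prod.fst_surjective, hS.image Prod.snd_surjective⟩,
    fun ⟨hfst, hsnd⟩ => invGen_iff_forall_subset_conjUnion.2 fun _ hM =>
      eq_top_of_map_fst_of_map_snd h (hfst.map_eq_top_of_subset_conjUnion hM)
        (hsnd.map_eq_top_of_subset_conjUnion hM)⟩

lemma InvGen.union_of_image_fst_of_image_snd (h : ¬ HasCommonNontrivialQuotient A B)
    {S T : Set (A × B)} (hS : InvGen (MonoidHom.fst A B '' S))
    (hT : InvGen (MonoidHom.snd A B '' T)) : InvGen (S ∪ T) :=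
  (invGen_prod_iff h).2
    ⟨hS.mono (image_mono subset_union_left), hT.mono (image_mono subset_union_right)⟩

lemma MinInvGen.image_inl_union_image_inr (h : ¬ HasCommonNontrivialQuotient A B) {S : Set A}
    {T : Set B} (hS : MinInvGen S) (hT : MinInvGen T) :
    MinInvGen (MonoidHom.inl A B '' S ∪ MonoidHom.inr A B '' T) := by
  refine minInvGen_iff_forall_sdiff_singleton.2 ⟨?_, ?_⟩
  · refine InvGen.union_of_image_fst_of_image_snd h ?_ ?_
    · simpa [image_image] using hS.1
    · simpa [image_image] using hT.1
  rintro _ (⟨a, ha, rfl⟩ | ⟨b, hb, rfl⟩) hgen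
  · refine (minInvGen_iff_forall_sdiff_singleton.1 hS).2 a ha (InvGen.of_insert_one ?_)
    refine (hgen.image (f := MonoidHom.fst A B) Prod.fst_surjective).mono ?_
    rintro _ ⟨_, ⟨⟨s, hs, rfl⟩ | ⟨t, -, rfl⟩, hne⟩, rfl⟩
    · exact .inr ⟨hs, by rintro rfl; exact hne rfl⟩
    · exact .inl rfl
  · refine (minInvGen_iff_forall_sdiff_singleton.1 hT).2 b hb (InvGen.of_insert_one ?_)
    refine (hgen.image (f := MonoidHom.snd A B) Prod.snd_surjective).mono ?_
    rintro _ ⟨_, ⟨⟨s, -, rfl⟩ | ⟨t, ht, rfl⟩, hne⟩, rfl⟩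
    · exact .inl rfl
    · exact .inr ⟨ht, by rintro rfl; exact hne rfl⟩

lemma disjoint_image_inl_image_inr {S : Set A} (hS : 1 ∉ S) (T : Set B) :
    Disjoint (MonoidHom.inl A B '' S) (MonoidHom.inr A B '' T) := by
  rw [disjoint_left]
  rintro _ ⟨a, ha, rfl⟩ ⟨b, -, hab⟩
  obtain rfl : 1 = a := congrArg Prod.fst hab
  exact hS ha

lemma mInv_prod_le [Finite A] [Finite B] (h : ¬ HasCommonNontrivialQuotient A B) :
    mInv (A × B) ≤ mInv A + mInv B := by
  refine mInv_le fun S hS => ?_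
  obtain ⟨hfst, hsnd⟩ := (invGen_prod_iff h).1 hS.1
  obtain ⟨S₁, hS₁, hgen₁, hcard₁⟩ := hfst.exists_subset_ncard_le_mInv
  obtain ⟨S₂, hS₂, hgen₂, hcard₂⟩ := hsnd.exists_subset_ncard_le_mInv
  have hunion : S₁ ∪ S₂ = S := (minInvGen_iff_minimal.1 hS).eq_of_subset
    (hgen₁.union_of_image_fst_of_image_snd h hgen₂) (union_subset hS₁ hS₂)
  calc S.ncard = (S₁ ∪ S₂).ncard := by rw [hunion]
    _ ≤ S₁.ncard + S₂.ncard := ncard_union_le S₁ S₂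
    _ ≤ mInv A + mInv B := add_le_add hcard₁ hcard₂

lemma add_mInv_le_mInv_prod [Finite A] [Finite B] (h : ¬ HasCommonNontrivialQuotient A B) :
    mInv A + mInv B ≤ mInv (A × B) := by
  obtain ⟨S, hS, hScard⟩ := exists_minInvGen_ncard_eq_mInv A
  obtain ⟨T, hT, hTcard⟩ := exists_minInvGen_ncard_eq_mInv B
  calc mInv A + mInv B
      = (MonoidHom.inl A B '' S).ncard + (MonoidHom.inr A B '' T).ncard := by
        rw [ncard_image_of_injective S (f := MonoidHom.inl A B) (Prod.mk_left_injective 1),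
          ncard_image_of_injective T (f := MonoidHom.inr A B) (Prod.mk_right_injective 1),
          hScard, hTcard]
    _ = (MonoidHom.inl A B '' S ∪ MonoidHom.inr A B '' T).ncard :=
        (ncard_union_eq (disjoint_image_inl_image_inr hS.one_notMem T)).symm
    _ ≤ mInv (A × B) := (hS.image_inl_union_image_inr h hT).ncard_le_mInv

end Products

theorem stmt9_general (A B : Type*) [Group A] [Finite A] [Group B] [Finite B]
    (h : ¬ HasCommonNontrivialQuotient A B) :
    mInv (A × B) = mInv A + mInv B :=
  (mInv_prod_le h).antisymm (add_mInv_le_mInv_prod h)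

/-- If the finite groups `A` and `B` have no common composition factor,
then `m_I(A × B) = m_I(A) + m_I(B)`. -/
theorem stmt9 (A B : Type*) [Group A] [Finite A] [Group B] [Finite B]
    (h : ¬ HasCommonSimpleSection A B) :
    mInv (A × B) = mInv A + mInv B :=
  stmt9_general A B fun hquot => h hquot.hasCommonSimpleSection
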